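/- Let τ ∈ ℂ with Im τ > 0, let u ∈ ℝ with 0 ≤ u ≤ 1, and for ξ ∈ ℂ set r(ξ) := Im ξ / Im τ. Define Ω_u(ξ, α) := exp(2πi · u · r(ξ) · α) · F(ξ, α, τ). Then for all ξ, α ∈ ℂ with θ(ξ, τ) ≠ 0 and θ(α, τ) ≠ 0 and all integers l, m: Ω_u(ξ + l + m·τ, α) = exp(2πi(u − 1) m α) · Ω_u(ξ, α). -/

import Mathlib

open Complex

/-- The "two thirds of the Jacobi triple product formula":
`θ(ξ, τ) = q^{1/12} (z^{1/2} - z^{-1/2}) ∏_{j≥1} (1 - qʲz) ∏_{j≥1} (1 - qʲz⁻¹)`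
with `q = exp(2πiτ)`, `z = exp(2πiξ)`. -/
noncomputable def theta (ξ τ : ℂ) : ℂ :=
  Complex.exp ((Real.pi : ℂ) * Complex.I * τ / 6) *
    (Complex.exp ((Real.pi : ℂ) * Complex.I * ξ) -
      Complex.exp (-((Real.pi : ℂ) * Complex.I * ξ))) *
    (∏' j : ℕ, (1 - Complex.exp (2 * (Real.pi : ℂ) * Complex.I * (((j : ℂ) + 1) * τ + ξ)))) *
    (∏' j : ℕ, (1 - Complex.exp (2 * (Real.pi : ℂ) * Complex.I * (((j : ℂ) + 1) * τ - ξ))))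

/-- The Kronecker function `F(ξ, η, τ) = θ′(0, τ) · θ(ξ + η, τ) / (θ(ξ, τ) · θ(η, τ))`,
where `θ′(0, τ)` is the derivative of `ξ ↦ θ(ξ, τ)` at `ξ = 0`. -/
noncomputable def kronF (ξ η τ : ℂ) : ℂ :=
  deriv (fun z => theta z τ) 0 * theta (ξ + η) τ / (theta ξ τ * theta η τ)

/-- The parametrized form `Ω_u(ξ, α) = exp(2πi·u·r(ξ)·α) · F(ξ, α, τ)` where
`r(ξ) = Im ξ / Im τ`. -/
noncomputable def OmegaU (τ : ℂ) (u : ℝ) (ξ α : ℂ) : ℂ :=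
  Complex.exp (2 * (Real.pi : ℂ) * Complex.I * (u : ℂ) * ((ξ.im / τ.im : ℝ) : ℂ) * α) *
    kronF ξ α τ

/-!
In terms of `q = exp(2πiτ)` and `z = exp(2πiξ)`, theta is an elementary factor times
`(qz; q)_∞ (q z⁻¹; q)_∞`. Under `ξ ↦ ξ + τ`, that is `z ↦ qz`, the first product loses `1 - qz` and
the second gains `1 - z⁻¹`; up to exponentials these are the elementary factor at `ξ + τ` and at
`ξ`, so `θ(ξ + τ) = -exp(-πi(τ + 2ξ)) θ(ξ)`. In the quotient `θ(ξ + α) / θ(ξ)` only `exp(-2πiα)`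
survives, and the shift of `Im ξ / Im τ` by `m` contributes the remaining `exp(2πi u m α)`.
-/

theorem map_add_zsmul_of_map_add_eq_mul {A K : Type*} [AddGroup A] [GroupWithZero K]
    {f : A → K} {c : A} {a : K} (ha : a ≠ 0) (hf : ∀ x, f (x + c) = a * f x) (x : A) (m : ℤ) :
    f (x + m • c) = a ^ m * f x := by
  induction m with
  | zero => simp
  | succ n ih => rw [add_one_zsmul, ← add_assoc, hf, ih, ← mul_assoc, add_comm, zpow_one_add₀ ha]
  | pred n ih =>
    refine mul_left_cancel₀ ha ?_
    rw [← hf, add_assoc, ← add_one_zsmul, sub_add_cancel, ih, ← mul_assoc, ← zpow_one_add₀ ha,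
      add_sub_cancel]

/-- The infinite `q`-Pochhammer symbol `(a; q)_∞ = ∏_{j ≥ 0} (1 - a qʲ)`, the form of both
infinite products in `theta`; `tprod` gives it a junk value where the product diverges. -/
noncomputable def qPochhammerInf {R : Type*} [CommRing R] [TopologicalSpace R] (a q : R) : R :=
  ∏' j : ℕ, (1 - a * q ^ j)

theorem multipliable_one_sub_mul_pow {R : Type*} [NormedCommRing R] [NormOneClass R]
    [CompleteSpace R] (a : R) {q : R} (hq : ‖q‖ < 1) :
    Multipliable fun j : ℕ => 1 - a * q ^ j := by
  have hsum : Summable fun j : ℕ => ‖-(a * q ^ j)‖ := by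
    simp only [norm_neg]
    exact ((summable_norm_geometric_of_norm_lt_one hq).mul_left ‖a‖).of_nonneg_of_le
      (fun _ => norm_nonneg _) fun _ => norm_mul_le _ _
  simpa only [sub_eq_add_neg] using multipliable_one_add_of_summable hsum

theorem qPochhammerInf_eq_one_sub_mul {R : Type*} [NormedCommRing R] [NormOneClass R]
    [CompleteSpace R] (a : R) {q : R} (hq : ‖q‖ < 1) :
    qPochhammerInf a q = (1 - a) * qPochhammerInf (a * q) q := by
  have hshift : ∀ j : ℕ, 1 - a * q ^ (j + 1) = 1 - a * q * q ^ j := fun j => by ring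
  rw [qPochhammerInf, tprod_eq_zero_mul'] <;> simp only [hshift]
  · rw [pow_zero, mul_one, qPochhammerInf]
  · exact multipliable_one_sub_mul_pow (a * q) hq

section

open scoped Real

theorem theta_eq_mul_qPochhammerInf (ξ τ : ℂ) :
    theta ξ τ = exp (π * I * τ / 6) * (exp (π * I * ξ) - exp (-(π * I * ξ))) *
      qPochhammerInf (exp (2 * π * I * (ξ + τ))) (exp (2 * π * I * τ)) *
      qPochhammerInf (exp (2 * π * I * (-ξ + τ))) (exp (2 * π * I * τ)) := by
  have hterm (x : ℂ) (j : ℕ) : exp (2 * π * I * (x + τ)) * exp (2 * π * I * τ) ^ j =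
      exp (2 * π * I * ((j + 1) * τ + x)) := by
    rw [← exp_nat_mul, ← exp_add]
    ring_nf
  simp only [theta, qPochhammerInf, hterm, sub_eq_add_neg]

theorem qPochhammerInf_exp_eq_one_sub_mul {τ : ℂ} (hτ : 0 < τ.im) (x : ℂ) :
    qPochhammerInf (exp (2 * π * I * x)) (exp (2 * π * I * τ)) =
      (1 - exp (2 * π * I * x)) *
        qPochhammerInf (exp (2 * π * I * (x + τ))) (exp (2 * π * I * τ)) := by
  rw [qPochhammerInf_eq_one_sub_mul _ (UpperHalfPlane.norm_exp_two_pi_I_lt_one ⟨τ, hτ⟩),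
    UpperHalfPlane.coe_mk, ← exp_add, mul_add]

theorem one_sub_exp_two_pi_I_mul (x : ℂ) :
    1 - exp (2 * π * I * x) = -(exp (π * I * x) * (exp (π * I * x) - exp (-(π * I * x)))) := by
  rw [mul_sub, ← exp_add, ← exp_add, add_neg_cancel, exp_zero]
  ring_nf

theorem theta_antiperiodic (τ : ℂ) : Function.Antiperiodic (fun ξ => theta ξ τ) 1 := by
  intro ξ
  have hpos : exp (π * I * (ξ + 1)) = -exp (π * I * ξ) := by
    rw [mul_add, mul_one, exp_antiperiodic]
  have hneg : exp (-(π * I * (ξ + 1))) = -exp (-(π * I * ξ)) := by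
    rw [mul_add, mul_one, neg_add, ← sub_eq_add_neg, exp_antiperiodic.sub_eq]
  have hplus : exp (2 * π * I * (ξ + 1 + τ)) = exp (2 * π * I * (ξ + τ)) := by
    rw [add_right_comm, mul_add _ (ξ + τ), mul_one, exp_periodic]
  have hminus : exp (2 * π * I * (-(ξ + 1) + τ)) = exp (2 * π * I * (-ξ + τ)) := by
    rw [← exp_periodic]
    ring_nf
  simp only [theta_eq_mul_qPochhammerInf, hpos, hneg, hplus, hminus]
  ring

theorem theta_add_tau {τ : ℂ} (hτ : 0 < τ.im) (ξ : ℂ) :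
    theta (ξ + τ) τ = -exp (-(π * I * (τ + 2 * ξ))) * theta ξ τ := by
  have hexp : exp (-(π * I * (τ + 2 * ξ))) * exp (π * I * (ξ + τ)) = exp (-(π * I * ξ)) := by
    rw [← exp_add]
    ring_nf
  have hplus : qPochhammerInf (exp (2 * π * I * (ξ + τ))) (exp (2 * π * I * τ)) =
      -(exp (π * I * (ξ + τ)) * (exp (π * I * (ξ + τ)) - exp (-(π * I * (ξ + τ))))) *
        qPochhammerInf (exp (2 * π * I * (ξ + τ + τ))) (exp (2 * π * I * τ)) := by
    rw [qPochhammerInf_exp_eq_one_sub_mul hτ, one_sub_exp_two_pi_I_mul]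
  have hminus : qPochhammerInf (exp (2 * π * I * (-(ξ + τ) + τ))) (exp (2 * π * I * τ)) =
      exp (-(π * I * (τ + 2 * ξ))) * exp (π * I * (ξ + τ)) *
        (exp (π * I * ξ) - exp (-(π * I * ξ))) *
        qPochhammerInf (exp (2 * π * I * (-ξ + τ))) (exp (2 * π * I * τ)) := by
    rw [neg_add, neg_add_cancel_right, qPochhammerInf_exp_eq_one_sub_mul hτ,
      one_sub_exp_two_pi_I_mul, mul_neg (π * I), neg_neg, hexp]
    ring
  rw [theta_eq_mul_qPochhammerInf, theta_eq_mul_qPochhammerInf, hplus, hminus]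
  ring

theorem kronF_periodic (α τ : ℂ) : Function.Periodic (fun ξ => kronF ξ α τ) 1 := by
  intro ξ
  have hξ : theta (ξ + 1) τ = -theta ξ τ := theta_antiperiodic τ ξ
  have hξα : theta (ξ + α + 1) τ = -theta (ξ + α) τ := theta_antiperiodic τ (ξ + α)
  simp only [kronF, add_right_comm ξ 1 α, hξ, hξα, mul_neg, neg_mul, neg_div_neg_eq]

theorem kronF_add_tau {τ : ℂ} (hτ : 0 < τ.im) (α ξ : ℂ) :
    kronF (ξ + τ) α τ = exp (-(2 * π * I * α)) * kronF ξ α τ := by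
  have hfactor : exp (-(π * I * (τ + 2 * (ξ + α)))) =
      exp (-(π * I * (τ + 2 * ξ))) * exp (-(2 * π * I * α)) := by
    rw [← exp_add]
    ring_nf
  have hne : exp (-(π * I * (τ + 2 * ξ))) ≠ 0 := exp_ne_zero _
  rw [kronF, kronF, add_right_comm, theta_add_tau hτ, theta_add_tau hτ, hfactor]
  field_simp

theorem kronF_add_int_add_int_mul {τ : ℂ} (hτ : 0 < τ.im) (α ξ : ℂ) (l m : ℤ) :
    kronF (ξ + l + m * τ) α τ = exp (-(2 * π * I * m * α)) * kronF ξ α τ := by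
  have hl : kronF (ξ + l) α τ = kronF ξ α τ := by
    simpa only [mul_one] using (kronF_periodic α τ).int_mul l ξ
  have hm := map_add_zsmul_of_map_add_eq_mul (f := fun ξ => kronF ξ α τ) (exp_ne_zero _)
    (kronF_add_tau hτ α) (ξ + l) m
  rw [zsmul_eq_mul, hl, ← exp_int_mul] at hm
  rw [hm]
  ring_nf

theorem im_add_int_add_int_mul_div_im {τ : ℂ} (hτ : τ.im ≠ 0) (ξ : ℂ) (l m : ℤ) :
    (ξ + l + m * τ).im / τ.im = ξ.im / τ.im + m := by
  simp [add_div, hτ]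

theorem stmt_14_general (τ : ℂ) (hτ : 0 < τ.im) (u : ℝ)
    (ξ α : ℂ) (_hξ : theta ξ τ ≠ 0) (_hα : theta α τ ≠ 0) (l m : ℤ) :
    OmegaU τ u (ξ + l + m * τ) α =
      exp (2 * π * I * (u - 1) * m * α) * OmegaU τ u ξ α := by
  have hexp : exp (2 * π * I * u * ((ξ.im / τ.im + m : ℝ) : ℂ) * α) *
      exp (-(2 * π * I * m * α)) =
      exp (2 * π * I * (u - 1) * m * α) * exp (2 * π * I * u * ((ξ.im / τ.im : ℝ) : ℂ) * α) := by
    rw [← exp_add, ← exp_add]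
    push_cast
    ring_nf
  rw [OmegaU, OmegaU, im_add_int_add_int_mul_div_im hτ.ne', kronF_add_int_add_int_mul hτ,
    ← mul_assoc, hexp, mul_assoc]

end

/-- `Ω_u(ξ + l + mτ, α) = exp(2πi(u-1)mα) · Ω_u(ξ, α)`. -/
theorem stmt_14 (τ : ℂ) (hτ : 0 < τ.im) (u : ℝ) (hu0 : 0 ≤ u) (hu1 : u ≤ 1)
    (ξ α : ℂ) (hξ : theta ξ τ ≠ 0) (hα : theta α τ ≠ 0) (l m : ℤ) :
    OmegaU τ u (ξ + (l : ℂ) + (m : ℂ) * τ) α =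
      Complex.exp (2 * (Real.pi : ℂ) * Complex.I * ((u : ℂ) - 1) * (m : ℂ) * α) *
        OmegaU τ u ξ α :=
  stmt_14_general τ hτ u ξ α hξ hα l m
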